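/- Let A be a finite alphabet with |A| ≥ 2 and let d ≥ 1. Every normal amenable subgroup of Aut(A^{ℤ^d}) is contained in Σ(A^{ℤ^d}), the group of shifts. -/

import Mathlib

/-!
The proof reduces to dimension one and there uses an extremely proximal action.

*Reduction.* Let `code u = ∑ i, u i * K ^ i : ℤ^d → ℤ`. The configurations `Y ∘ code`, with
`Y : ℤ → A`, are those invariant under the kernel of `code`, so they are permuted by every
automorphism; this gives an action `restr` of `Aut(A^{ℤ^d})` on `A^ℤ` by cellular automata. Every
one-dimensional automorphism used below is in its image: apply it to all rows in the direction of
the first axis. If `K` is chosen so that `code` is injective on a neighbourhood defining `g`, then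
`g` is a shift as soon as its restriction is one.

*Dimension one.* Fix a letter `z` and let `X = LeftAsymp z` be the set of configurations other than
`z^ℤ` that are equal to `z` far to the left. For a word `w` of length `k` with `w 0 ≠ z`, let
`Cyl z w k ⊆ X` be the set of those `Y` whose part from the first letter different from `z` on
begins with `w`. The involution `swap z w k L` inserts `w` in front of the first non-`z` letter
of `Y` when `Y` does not begin with `w`, hence maps `X \ Cyl z w k` into `Cyl z w k`
(`swap_mem_cyl`).

Let `g` be in the normal amenable subgroup `N` and fix `z^ℤ`. If `g` is not a shift, then some
`U = Cyl z w k` satisfies `g U ∩ U = ∅` (`IsCAAction.eq_shift_or`). An invariant mean on `N` gives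
a finitely additive `N`-invariant measure `μ` with `μ X > 0`. For any involution `φ` as above,
`φ g φ⁻¹ ∈ N` maps `φ U` into `φ (X \ U)`, so `φ (X \ U)` has at least half of the mass of `X`.
With `φ` coming from two different one-letter extensions of `w`, the sets `φ (X \ U)` are disjoint
subsets of `U`, so `U` has full mass in `X`; but `g⁻¹ U ⊆ X \ U` has the same mass, a contradiction.

If instead `g` maps `z^ℤ` to `b^ℤ` with `b ≠ z`, take an involution `φ = swap z (aa) 2 L` with `L`
large. The commutator of `g` and `φ` lies in `N` and fixes `z^ℤ`, hence is a shift; evaluated at a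
configuration with a single letter `a ≠ z`, this shows that `φ` only shifts that configuration,
which is not so.
-/

/-- The group of self-homeomorphisms of a topological space,
with `(f * g) x = f (g x)`. -/
instance homeoGroup (X : Type*) [TopologicalSpace X] : Group (X ≃ₜ X) where
  mul f g := g.trans f
  one := Homeomorph.refl X
  inv := Homeomorph.symm
  mul_assoc f g h := Homeomorph.ext fun _ => rfl
  one_mul f := Homeomorph.ext fun _ => rfl
  mul_one f := Homeomorph.ext fun _ => rfl
  inv_mul_cancel f := Homeomorph.ext f.symm_apply_apply

/-- A group is amenable if there is a left-invariant mean on its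
bounded real-valued functions. -/
def IsAmenable (G : Type*) [Group G] : Prop :=
  ∃ m : (G → ℝ) → ℝ,
    (∀ f₁ f₂ : G → ℝ, (∃ C, ∀ x, |f₁ x| ≤ C) → (∃ C, ∀ x, |f₂ x| ≤ C) →
      m (f₁ + f₂) = m f₁ + m f₂) ∧
    (∀ (c : ℝ) (f : G → ℝ), (∃ C, ∀ x, |f x| ≤ C) → m (c • f) = c * m f) ∧
    (∀ f : G → ℝ, (∃ C, ∀ x, |f x| ≤ C) → (∀ x, 0 ≤ f x) → 0 ≤ m f) ∧
    m (fun _ => 1) = 1 ∧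
    (∀ (g : G) (f : G → ℝ), (∃ C, ∀ x, |f x| ≤ C) →
      m (fun x => f (g * x)) = m f)

/-- The shift `σ_v`, `(σ_v x) u = x (u + v)`, on `A^{ℤ^d}`, as a homeomorphism. -/
def shiftD (d : ℕ) (A : Type*) [TopologicalSpace A] (v : Fin d → ℤ) :
    ((Fin d → ℤ) → A) ≃ₜ ((Fin d → ℤ) → A) where
  toFun x := fun u => x (u + v)
  invFun x := fun u => x (u - v)
  left_inv x := funext fun u => by simp
  right_inv x := funext fun u => by simp
  continuous_toFun := continuous_pi fun u => continuous_apply (u + v)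
  continuous_invFun := continuous_pi fun u => continuous_apply (u - v)

/-- `Aut(A^{ℤ^d})`: the group of homeomorphisms of `A^{ℤ^d}` commuting with all shifts. -/
def ShiftAutD (d : ℕ) (A : Type*) [TopologicalSpace A] :
    Subgroup (((Fin d → ℤ) → A) ≃ₜ ((Fin d → ℤ) → A)) :=
  Subgroup.centralizer (Set.range (shiftD d A))

namespace FullShift

/-! ### The involutions `swap` -/

section OneDim
variable {A : Type*}

/-- The position `i` is active in `Y`: it carries a letter other than `z`, the word of length `k`
starting there is not `w`, the `k` cells before it (its *window*) spell `z^k` or `w`, and the `L`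
cells before the window all carry `z`. Only `w 0, …, w (k - 1)` matter. -/
def Act (z : A) (w : ℤ → A) (k L : ℤ) (Y : ℤ → A) (i : ℤ) : Prop :=
  (∀ t, i - k - L ≤ t → t < i - k → Y t = z) ∧ Y i ≠ z ∧
  (¬ ∀ t, 0 ≤ t → t < k → Y (i + t) = w t) ∧
  ((∀ t, 0 ≤ t → t < k → Y (i - k + t) = z) ∨ (∀ t, 0 ≤ t → t < k → Y (i - k + t) = w t))

open Classical in
/-- The cellular automaton exchanging `z^k` and `w` in the window of each active position. The
window of an active `i` spells `z^k` exactly when its first letter is `z`, because `w 0 ≠ z` in all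
uses. -/
noncomputable def swap (z : A) (w : ℤ → A) (k L : ℤ) (Y : ℤ → A) (u : ℤ) : A :=
  if h : ∃ i, Act z w k L Y i ∧ i - k ≤ u ∧ u < i then
    (if Y (h.choose - k) = z then w (u - h.choose + k) else z)
  else Y u

theorem Act.congr {z : A} {w : ℤ → A} {k L : ℤ} (hk : 0 < k) (hL : k ≤ L) {Y Y' : ℤ → A} {i : ℤ}
    (h : ∀ t, i - k - L ≤ t → t < i + k → Y t = Y' t) (hi : Act z w k L Y i) :
    Act z w k L Y' i := by
  obtain ⟨h1, h2, h3, h4⟩ := hi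
  refine ⟨fun t ht ht' => ?_, ?_, fun h' => h3 fun t ht ht' => ?_, ?_⟩
  · rw [← h t (by omega) (by omega)]; exact h1 t ht ht'
  · rw [← h i (by omega) (by omega)]; exact h2
  · rw [h _ (by omega) (by omega)]; exact h' t ht ht'
  · rcases h4 with h4 | h4
    · left; intro t ht ht'; rw [← h _ (by omega) (by omega)]; exact h4 t ht ht'
    · right; intro t ht ht'; rw [← h _ (by omega) (by omega)]; exact h4 t ht ht'

/-- Two active positions are so far apart that the window of one does not meet the cells which
decide whether the other is active. -/
theorem Act.spacing {z : A} {w : ℤ → A} {k L : ℤ} (hw : w 0 ≠ z) (hk : 0 < k) (hL : k ≤ L)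
    {Y : ℤ → A} {i j : ℤ} (hi : Act z w k L Y i) (hj : Act z w k L Y j) (hij : i < j) :
    i + k + L < j := by
  by_contra hlt
  -- `i` cannot lie in the block of `z` before the window of `j`, so it lies in the window of `j`
  have h1 : j - k ≤ i := by
    by_contra h
    exact hi.2.1 (hj.1 i (by omega) (by omega))
  have hjw : ∀ t, 0 ≤ t → t < k → Y (j - k + t) = w t := by
    rcases hj.2.2.2 with h | h
    · exact absurd (by simpa using h (i - (j - k)) (by omega) (by omega)) hi.2.1
    · exact h
  have hj0 : Y (j - k) ≠ z := by
    have := hjw 0 le_rfl hk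
    rw [add_zero] at this
    rwa [this]
  -- the window of `i` starts in the block of `z` before the window of `j`, so it is not `w`
  have hiz : ∀ t, 0 ≤ t → t < k → Y (i - k + t) = z := by
    rcases hi.2.2.2 with h | h
    · exact h
    · have h0 := h 0 le_rfl hk
      rw [add_zero, hj.1 (i - k) (by omega) (by omega)] at h0
      exact absurd h0.symm hw
  have h2 : j - k = i := by
    by_contra h
    exact hj0 (by simpa using hiz (j - k - (i - k)) (by omega) (by omega))
  exact hi.2.2.1 (h2 ▸ hjw)

theorem Act.eq_or_far {z : A} {w : ℤ → A} {k L : ℤ} (hw : w 0 ≠ z) (hk : 0 < k) (hL : k ≤ L)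
    {Y : ℤ → A} {i j : ℤ} (hi : Act z w k L Y i) (hj : Act z w k L Y j) :
    i = j ∨ i + k + L < j ∨ j + k + L < i := by
  rcases lt_trichotomy i j with h | h | h
  · exact Or.inr (Or.inl (hi.spacing hw hk hL hj h))
  · exact Or.inl h
  · exact Or.inr (Or.inr (hj.spacing hw hk hL hi h))

open Classical in
theorem swap_on {z : A} {w : ℤ → A} {k L : ℤ} (hw : w 0 ≠ z) (hk : 0 < k) (hL : k ≤ L)
    {Y : ℤ → A} {i u : ℤ} (hi : Act z w k L Y i) (h1 : i - k ≤ u) (h2 : u < i) :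
    swap z w k L Y u = if Y (i - k) = z then w (u - i + k) else z := by
  have h : ∃ i, Act z w k L Y i ∧ i - k ≤ u ∧ u < i := ⟨i, hi, h1, h2⟩
  have hc := h.choose_spec
  have : h.choose = i := by
    rcases hc.1.eq_or_far hw hk hL hi with h | h | h <;> omega
  rw [swap, dif_pos h, this]

theorem swap_off {z : A} {w : ℤ → A} {k L : ℤ} {Y : ℤ → A} {u : ℤ}
    (h : ∀ i, Act z w k L Y i → i - k ≤ u → u < i → False) :
    swap z w k L Y u = Y u := by
  rw [swap, dif_neg]
  rintro ⟨i, hi, h1, h2⟩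
  exact h i hi h1 h2

theorem Act.swap {z : A} {w : ℤ → A} {k L : ℤ} (hw : w 0 ≠ z) (hk : 0 < k) (hL : k ≤ L)
    {Y : ℤ → A} {i : ℤ} (hi : Act z w k L Y i) : Act z w k L (swap z w k L Y) i := by
  have hoff : ∀ t, i - k - L ≤ t → t < i + k → (t < i - k ∨ i ≤ t) →
      FullShift.swap z w k L Y t = Y t := by
    intro t h1 h2 h3
    refine swap_off fun j hj h4 h5 => ?_
    rcases hi.eq_or_far hw hk hL hj with h | h | h <;> omega
  obtain ⟨h1, h2, h3, h4⟩ := id hi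
  refine ⟨fun t ht ht' => ?_, ?_, fun h' => h3 fun t ht ht' => ?_, ?_⟩
  · rw [hoff t (by omega) (by omega) (by omega)]; exact h1 t ht ht'
  · rw [hoff i (by omega) (by omega) (by omega)]; exact h2
  · rw [← hoff _ (by omega) (by omega) (by omega)]; exact h' t ht ht'
  · by_cases h0 : Y (i - k) = z
    · right; intro t ht ht'
      rw [swap_on hw hk hL hi (by omega) (by omega), if_pos h0]
      congr 1; ring
    · left; intro t ht ht'
      rw [swap_on hw hk hL hi (by omega) (by omega), if_neg h0]

theorem act_swap_iff {z : A} {w : ℤ → A} {k L : ℤ} (hw : w 0 ≠ z) (hk : 0 < k) (hL : k ≤ L)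
    {Y : ℤ → A} {i : ℤ} : Act z w k L (swap z w k L Y) i ↔ Act z w k L Y i := by
  refine ⟨fun hi => ?_, fun hi => hi.swap hw hk hL⟩
  by_contra hn
  refine hn (hi.congr hk hL fun t h1 h2 => swap_off fun j hj h3 h4 => ?_)
  rcases hi.eq_or_far hw hk hL (hj.swap hw hk hL) with h | h | h
  · exact hn (h ▸ hj)
  · omega
  · omega

theorem swap_swap {z : A} {w : ℤ → A} {k L : ℤ} (hw : w 0 ≠ z) (hk : 0 < k) (hL : k ≤ L)
    (Y : ℤ → A) : swap z w k L (swap z w k L Y) = Y := by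
  funext u
  by_cases h : ∃ i, Act z w k L Y i ∧ i - k ≤ u ∧ u < i
  · obtain ⟨i, hi, h1, h2⟩ := h
    rw [swap_on hw hk hL (hi.swap hw hk hL) h1 h2, swap_on hw hk hL hi le_rfl (by omega)]
    have e1 : i - k - i + k = 0 := by ring
    have e2 : i - k + (u - i + k) = u := by ring
    rcases hi.2.2.2 with h4 | h4
    · have h0 := h4 0 le_rfl hk
      have hu := h4 (u - i + k) (by omega) (by omega)
      rw [add_zero] at h0
      rw [e2] at hu
      rw [if_pos h0, e1, if_neg hw, hu]
    · have h0 := h4 0 le_rfl hk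
      have hu := h4 (u - i + k) (by omega) (by omega)
      rw [add_zero] at h0
      rw [e2] at hu
      rw [h0, if_neg hw, if_pos rfl, hu]
  · rw [swap_off, swap_off]
    · exact fun i hi h1 h2 => h ⟨i, hi, h1, h2⟩
    · exact fun i hi h1 h2 => h ⟨i, (act_swap_iff hw hk hL).1 hi, h1, h2⟩

theorem act_shift {z : A} {w : ℤ → A} {k L : ℤ} {Y : ℤ → A} {i v : ℤ} :
    Act z w k L (fun t => Y (t + v)) i ↔ Act z w k L Y (i + v) := by
  have e (t : ℤ) : i + t + v = i + v + t := by ring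
  have e' (t : ℤ) : i - k + t + v = i + v - k + t := by ring
  simp only [Act, e, e']
  refine and_congr ⟨fun h t h1 h2 => ?_, fun h t h1 h2 => ?_⟩ Iff.rfl
  · simpa using h (t - v) (by omega) (by omega)
  · exact h (t + v) (by omega) (by omega)

theorem swap_shift {z : A} {w : ℤ → A} {k L : ℤ} (hw : w 0 ≠ z) (hk : 0 < k) (hL : k ≤ L)
    (Y : ℤ → A) (v u : ℤ) :
    swap z w k L (fun t => Y (t + v)) u = swap z w k L Y (u + v) := by
  by_cases h : ∃ i, Act z w k L Y (i + v) ∧ i - k ≤ u ∧ u < i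
  · obtain ⟨i, hi, h1, h2⟩ := h
    rw [swap_on hw hk hL (act_shift.2 hi) h1 h2, swap_on hw hk hL hi (by omega) (by omega)]
    have e1 : i - k + v = i + v - k := by ring
    have e2 : u - i + k = u + v - (i + v) + k := by ring
    rw [e1, e2]
  · rw [swap_off, swap_off]
    · exact fun i hi h1 h2 => h ⟨i - v, by simpa using hi, by omega, by omega⟩
    · exact fun i hi h1 h2 => h ⟨i, act_shift.1 hi, h1, h2⟩

theorem swap_congr {z : A} {w : ℤ → A} {k L : ℤ} (hw : w 0 ≠ z) (hk : 0 < k) (hL : k ≤ L)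
    {Y Y' : ℤ → A} {u : ℤ} (h : ∀ t, u - 2 * k - L ≤ t → t ≤ u + 2 * k → Y t = Y' t) :
    swap z w k L Y u = swap z w k L Y' u := by
  by_cases hh : ∃ i, Act z w k L Y i ∧ i - k ≤ u ∧ u < i
  · obtain ⟨i, hi, h1, h2⟩ := hh
    have hi' : Act z w k L Y' i := hi.congr hk hL fun t h3 h4 => h t (by omega) (by omega)
    rw [swap_on hw hk hL hi h1 h2, swap_on hw hk hL hi' h1 h2, h (i - k) (by omega) (by omega)]
  · rw [swap_off, swap_off, h u (by omega) (by omega)]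
    · intro i hi h1 h2
      exact hh ⟨i, hi.congr hk hL fun t h3 h4 => (h t (by omega) (by omega)).symm, h1, h2⟩
    · exact fun i hi h1 h2 => hh ⟨i, hi, h1, h2⟩

theorem continuous_swap [TopologicalSpace A] [DiscreteTopology A]
    {z : A} {w : ℤ → A} {k L : ℤ} (hw : w 0 ≠ z) (hk : 0 < k) (hL : k ≤ L) :
    Continuous (swap z w k L) := by
  refine continuous_pi fun u => ?_
  refine IsLocallyConstant.continuous ?_
  rw [IsLocallyConstant.iff_exists_open]
  intro Y
  refine ⟨(Set.Icc (u - 2 * k - L) (u + 2 * k)).pi fun t => {Y t},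
    isOpen_set_pi (Set.finite_Icc _ _) fun t _ => isOpen_discrete _, fun t _ => rfl, ?_⟩
  intro Y' hY'
  exact swap_congr hw hk hL fun t h1 h2 => hY' t ⟨h1, h2⟩

theorem swap_const {z : A} {w : ℤ → A} {k L : ℤ} (hk : 0 < k) (hL : k ≤ L) (b : A) :
    swap z w k L (fun _ => b) = fun _ => b := by
  have hL0 : 0 < L := hk.trans_le hL
  funext u
  exact swap_off fun i hi _ _ => hi.2.1 (hi.1 (i - k - L) le_rfl (by omega))

/-! ### Configurations that are constant on the left -/

/-- The configurations that are equal to `z` up to some position `p` and spell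
`w 0, …, w (k - 1)` from `p` on. It is used with `w 0 ≠ z` and `0 < k`, so that `p` is the first
position with a letter other than `z`. -/
def Cyl (z : A) (w : ℤ → A) (k : ℤ) : Set (ℤ → A) :=
  {Y | ∃ p, (∀ i < p, Y i = z) ∧ ∀ t, 0 ≤ t → t < k → Y (p + t) = w t}

/-- The configurations that are equal to `z` far to the left, except the constant one. -/
def LeftAsymp (z : A) : Set (ℤ → A) :=
  {Y | (∃ p, ∀ i < p, Y i = z) ∧ Y ≠ fun _ => z}

theorem LeftAsymp.exists_first {z : A} {Y : ℤ → A} (h : Y ∈ LeftAsymp z) :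
    ∃ p, (∀ i < p, Y i = z) ∧ Y p ≠ z := by
  obtain ⟨⟨p, hp⟩, hne⟩ := h
  have hne' : ∃ q, Y q ≠ z := by
    by_contra hh
    push Not at hh
    exact hne (funext hh)
  obtain ⟨q, hq, hmin⟩ := Int.exists_least_of_bdd (P := fun q => Y q ≠ z)
    ⟨p, fun i hi => not_lt.1 fun hlt => hi (hp i hlt)⟩ hne'
  exact ⟨q, fun i hi => by_contra fun h => absurd (hmin i h) (not_le.2 hi), hq⟩

theorem first_unique {z : A} {Y : ℤ → A} {p q : ℤ} (hp : ∀ i < p, Y i = z) (hp' : Y p ≠ z)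
    (hq : ∀ i < q, Y i = z) (hq' : Y q ≠ z) : p = q := by
  rcases lt_trichotomy p q with h | h | h
  · exact absurd (hq p h) hp'
  · exact h
  · exact absurd (hp q h) hq'

/-- If `Y` has its first non-`z` letter at `p` and does not begin with `w`, then `swap` puts `w`
directly before `p` and changes nothing further to the left. -/
theorem swap_first {z : A} {w : ℤ → A} {k L : ℤ} (hw : w 0 ≠ z) (hk : 0 < k) (hL : k ≤ L)
    {Y : ℤ → A} {p : ℤ} (hp : ∀ i < p, Y i = z) (hp' : Y p ≠ z)
    (hU : Y ∉ Cyl z w k) :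
    (∀ i < p - k, swap z w k L Y i = z) ∧
      ∀ t, 0 ≤ t → t < k → swap z w k L Y (p - k + t) = w t := by
  have hact : Act z w k L Y p := ⟨fun t _ h => hp t (by omega), hp', fun h => hU ⟨p, hp, h⟩,
    Or.inl fun t _ h => hp _ (by omega)⟩
  constructor
  · intro i hi
    rw [swap_off, hp i (by omega)]
    intro j hj h1 h2
    rcases hact.eq_or_far hw hk hL hj with h | h | h
    · omega
    · omega
    · exact hj.2.1 (hp j (by omega))
  · intro t h1 h2
    rw [swap_on hw hk hL hact (by omega) (by omega), if_pos (hp _ (by omega))]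
    congr 1; ring

theorem swap_mem_cyl {z : A} {w : ℤ → A} {k L : ℤ} (hw : w 0 ≠ z) (hk : 0 < k) (hL : k ≤ L)
    {Y : ℤ → A} (hY : Y ∈ LeftAsymp z) (hU : Y ∉ Cyl z w k) : swap z w k L Y ∈ Cyl z w k := by
  obtain ⟨p, hp, hp'⟩ := LeftAsymp.exists_first hY
  exact ⟨p - k, swap_first hw hk hL hp hp' hU⟩

theorem cyl_subset {z : A} {w : ℤ → A} {k : ℤ} (hw : w 0 ≠ z) (hk : 0 < k) :
    Cyl z w k ⊆ LeftAsymp z := by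
  rintro Y ⟨p, hp, h⟩
  refine ⟨⟨p, hp⟩, fun e => hw ?_⟩
  rw [← h 0 le_rfl hk, e]


/-! ### Group actions on `A^ℤ` by cellular automata -/

/-- `ρ` is an action of `Γ` on `A^ℤ` by maps that commute with the shifts and have a finite radius,
and every involution `swap` is the action of an element of `Γ`. -/
structure IsCAAction {Γ : Type*} [Group Γ] (ρ : Γ → (ℤ → A) → (ℤ → A)) : Prop where
  one : ∀ Y, ρ 1 Y = Y
  mul : ∀ a b Y, ρ (a * b) Y = ρ a (ρ b Y)
  shift : ∀ γ Y v u, ρ γ (fun t => Y (t + v)) u = ρ γ Y (u + v)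
  loc : ∀ γ, ∃ r, 0 ≤ r ∧
    ∀ Y Y' u, (∀ t, u - r ≤ t → t ≤ u + r → Y t = Y' t) → ρ γ Y u = ρ γ Y' u
  swap : ∀ (z : A) w k L, w 0 ≠ z → 0 < k → k ≤ L → ∃ φ, ρ φ = swap z w k L

variable {Γ : Type*} [Group Γ] {ρ : Γ → (ℤ → A) → (ℤ → A)}

theorem IsCAAction.inv_apply (h : IsCAAction ρ) (γ : Γ) (Y : ℤ → A) : ρ γ⁻¹ (ρ γ Y) = Y := by
  rw [← h.mul, inv_mul_cancel, h.one]

theorem IsCAAction.injective (h : IsCAAction ρ) (γ : Γ) : Function.Injective (ρ γ) :=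
  (show Function.LeftInverse (ρ γ⁻¹) (ρ γ) from h.inv_apply γ).injective

theorem IsCAAction.const (h : IsCAAction ρ) (γ : Γ) (a : A) :
    ∃ b, ρ γ (fun _ => a) = fun _ => b := by
  refine ⟨ρ γ (fun _ => a) 0, funext fun u => ?_⟩
  have := h.shift γ (fun _ => a) u 0
  rw [zero_add] at this
  exact this.symm

theorem IsCAAction.mapsTo (h : IsCAAction ρ) {γ : Γ} {a b : A}
    (hab : ρ γ (fun _ => a) = fun _ => b) {Y : ℤ → A} (hY : Y ∈ LeftAsymp a) :
    ρ γ Y ∈ LeftAsymp b := by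
  obtain ⟨⟨p, hp⟩, hne⟩ := hY
  obtain ⟨r, hr0, hr⟩ := h.loc γ
  refine ⟨⟨p - r, fun i hi => ?_⟩, fun e => hne (h.injective γ (e.trans hab.symm))⟩
  rw [hr Y (fun _ => a) i fun t _ ht => hp t (by omega), hab]

theorem IsCAAction.preimage (h : IsCAAction ρ) {γ : Γ} {a b : A}
    (hab : ρ γ (fun _ => a) = fun _ => b) : ρ γ ⁻¹' LeftAsymp b = LeftAsymp a := by
  ext Y
  refine ⟨fun hY => ?_, fun hY => h.mapsTo hab hY⟩
  have hba : ρ γ⁻¹ (fun _ => b) = fun _ => a := by rw [← hab, h.inv_apply]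
  have := h.mapsTo hba hY
  rwa [h.inv_apply] at this

theorem exists_first_zero {z a : A} (haz : a ≠ z) :
    ∃ Y : ℤ → A, (∀ i < 0, Y i = z) ∧ Y 0 ≠ z :=
  ⟨fun i => if i < 0 then z else a, fun i hi => if_pos hi, by simpa using haz⟩

/-- An element that fixes `z^ℤ` and moves no cylinder `Cyl z w k` off itself is a shift. Let `D` be
the largest distance by which it moves the first non-`z` letter to the left, attained at `ζ`. Every
`Y` beginning like `ζ` is then displaced by exactly `D`, and returning to all cylinders around `Y`
forces it to be mapped to its shift by `D`. As any finite pattern occurs in such a `Y`, the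
local rule is that of the shift. -/
theorem IsCAAction.eq_shift_or (h : IsCAAction ρ) {z a : A} (haz : a ≠ z) {γ : Γ}
    (hγ : ρ γ (fun _ => z) = fun _ => z)
    (hU : ∀ w k, w 0 ≠ z → 0 < k → ∃ Y ∈ Cyl z w k, ρ γ Y ∈ Cyl z w k) :
    ∃ v, ∀ Y u, ρ γ Y u = Y (u + v) := by
  obtain ⟨r, hr0, hr⟩ := h.loc γ
  have hmem : ∀ Y : ℤ → A, (∀ i < 0, Y i = z) → Y 0 ≠ z → Y ∈ LeftAsymp z :=
    fun Y h0 h1 => ⟨⟨0, h0⟩, fun e => h1 (by rw [e])⟩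
  obtain ⟨D, ⟨ζ, hζ0, hζ1, hζ2, hζ3⟩, hD⟩ := Int.exists_greatest_of_bdd
    (P := fun δ => ∃ Y : ℤ → A, (∀ i < 0, Y i = z) ∧ Y 0 ≠ z ∧
      (∀ i < -δ, ρ γ Y i = z) ∧ ρ γ Y (-δ) ≠ z)
    (by
      refine ⟨r, ?_⟩
      rintro δ ⟨Y, h0, h1, h2, h3⟩
      by_contra hlt
      refine h3 ?_
      rw [hr Y (fun _ => z) (-δ) fun t _ ht => h0 t (by omega), hγ])
    (by
      obtain ⟨Y, h0, h1⟩ := exists_first_zero haz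
      obtain ⟨p, hp, hp'⟩ := LeftAsymp.exists_first (h.mapsTo hγ (hmem Y h0 h1))
      exact ⟨-p, Y, h0, h1, by simpa using hp, by simpa using hp'⟩)
  -- `k₀` is large enough for `ρ γ Y (-D)` to depend only on the cells below `k₀`
  obtain ⟨k₀, hk₀, hk₁⟩ : ∃ k₀ : ℤ, 0 < k₀ ∧ -D + r < k₀ :=
    ⟨max 1 (-D + r + 1), by omega, by omega⟩
  have hfirst : ∀ Y : ℤ → A, (∀ i < k₀, Y i = ζ i) →
      (∀ i < -D, ρ γ Y i = z) ∧ ρ γ Y (-D) ≠ z := by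
    intro Y hY
    have h0 : ∀ i < 0, Y i = z := fun i hi => by rw [hY i (by omega), hζ0 i hi]
    have h1 : Y 0 ≠ z := by rwa [hY 0 hk₀]
    have h2 : ρ γ Y (-D) ≠ z := by
      rwa [hr Y ζ (-D) fun t _ ht => hY t (by omega)]
    refine ⟨?_, h2⟩
    obtain ⟨p, hp, hp'⟩ := LeftAsymp.exists_first (h.mapsTo hγ (hmem Y h0 h1))
    have := hD (-p) ⟨Y, h0, h1, by simpa using hp, by simpa using hp'⟩
    exact fun i hi => hp i (by omega)
  have hkey : ∀ Y : ℤ → A, (∀ i < k₀, Y i = ζ i) → ∀ t, 0 ≤ t → ρ γ Y (-D + t) = Y t := by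
    intro Y hY t ht
    obtain ⟨k, hk1, hk2, hk3⟩ : ∃ k, k₀ ≤ k ∧ t < k ∧ -D + t + r < k :=
      ⟨max k₀ (max (t + 1) (-D + t + r + 1)), by omega, by omega, by omega⟩
    have hY0 : Y 0 ≠ z := by rwa [hY 0 hk₀]
    obtain ⟨Y₁, ⟨p, hp, hp'⟩, q, hq, hq'⟩ := hU Y k hY0 (by omega)
    -- translate so that `Y₁` starts at `0`
    set Y₂ : ℤ → A := fun t => Y₁ (t + p) with hY₂
    have hY₂Y : ∀ i < k, Y₂ i = Y i := by
      intro i hi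
      rcases lt_or_ge i 0 with h0 | h0
      · rw [hY i (by omega), hζ0 i h0, hY₂]
        exact hp _ (by omega)
      · rw [← hp' i h0 hi, add_comm]
    have hsh : ∀ u, ρ γ Y₂ u = ρ γ Y₁ (u + p) := fun u => h.shift γ Y₁ p u
    obtain ⟨h1, h2⟩ := hfirst Y₂ fun i hi => (hY₂Y i (by omega)).trans (hY i hi)
    have hqp : q = -D + p := by
      refine first_unique (Y := ρ γ Y₁) hq ?_ (fun i hi => ?_) (by rwa [← hsh])
      · have := hq' 0 le_rfl (by omega)
        rw [add_zero] at this
        rwa [this]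
      · have := h1 (i - p) (by omega)
        rwa [hsh, sub_add_cancel] at this
    rw [← hr Y₂ Y (-D + t) fun s _ hs => hY₂Y s (by omega), hsh, ← hq' t ht hk2, hqp]
    congr 1; ring
  have hzero : ∀ Y : ℤ → A, ρ γ Y 0 = Y D := by
    intro Y
    obtain ⟨q, hq1, hq2⟩ : ∃ q, k₀ ≤ q - r ∧ k₀ ≤ q + D :=
      ⟨max (k₀ + r) (k₀ - D), by omega, by omega⟩
    -- `Y'` begins like `ζ` and continues with a translate of `Y`
    set Y' : ℤ → A := fun i => if i < k₀ then ζ i else Y (i - q) with hY'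
    have h1 := hkey Y' (fun i hi => if_pos hi) (q + D) (by omega)
    have h2 : ρ γ Y' q = ρ γ (fun i => Y (i + -q)) q :=
      hr _ _ _ fun t ht _ => by simp only [hY']; rw [if_neg (by omega)]; rfl
    rw [h.shift] at h2
    have e1 : -D + (q + D) = q := by ring
    rw [e1, h2] at h1
    simp only [hY'] at h1
    rw [if_neg (by omega)] at h1
    simpa using h1
  refine ⟨D, fun Y u => ?_⟩
  have := h.shift γ Y u 0
  rw [hzero, zero_add] at this
  rw [← this, add_comm]

/-! ### Normal amenable subgroups in dimension one -/

/-- The push-forward of an invariant mean along the orbit map of `x₀`: a finitely additive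
`N`-invariant probability measure, defined on all subsets and carried by the orbit `N x₀`. -/
theorem exists_invariant_content {N : Subgroup Γ} (hN : IsAmenable N) {X : Type*}
    (ρ : Γ → X → X) (mul : ∀ a b x, ρ (a * b) x = ρ a (ρ b x)) (x₀ : X) :
    ∃ μ : Set X → ℝ, (∀ S, 0 ≤ μ S) ∧ (∀ S T, Disjoint S T → μ (S ∪ T) = μ S + μ T) ∧
      (∀ n ∈ N, ∀ S, μ (ρ n ⁻¹' S) = μ S) ∧ (∀ S, (∀ n ∈ N, ρ n x₀ ∈ S) → μ S = 1) := by
  classical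
  obtain ⟨m, hadd, -, hpos, hone, hinv⟩ := hN
  have hb : ∀ S : Set X, ∃ C, ∀ n : N, |S.indicator (1 : X → ℝ) (ρ n x₀)| ≤ C := by
    refine fun S => ⟨1, fun n => ?_⟩
    by_cases hn : ρ n x₀ ∈ S <;> simp [hn]
  refine ⟨fun S => m fun n : N => S.indicator (1 : X → ℝ) (ρ n x₀), fun S => ?_, fun S T hST => ?_,
    fun n hn S => ?_, fun S hS => ?_⟩
  · exact hpos _ (hb S) fun n => Set.indicator_nonneg (fun _ _ => zero_le_one) _
  · beta_reduce
    rw [← hadd _ _ (hb S) (hb T)]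
    congr 1
    funext n
    rw [Set.indicator_union_of_disjoint hST]
    rfl
  · beta_reduce
    rw [← hinv ⟨n, hn⟩ _ (hb S)]
    congr 1
    funext x
    simp only [Subgroup.coe_mul, mul]
    rfl
  · beta_reduce
    rw [← hone]
    congr 1
    funext n
    exact Set.indicator_of_mem (hS n n.2) _


/-- An element of a normal amenable subgroup that fixes a constant configuration is a shift. -/
theorem IsCAAction.shift_of_fixes [Finite A] (h : IsCAAction ρ) {N : Subgroup Γ} (hN : N.Normal)
    (hNa : IsAmenable N) {z a : A} (haz : a ≠ z) {g : Γ} (hg : g ∈ N)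
    (hgz : ρ g (fun _ => z) = fun _ => z) : ∃ v, ∀ Y u, ρ g Y u = Y (u + v) := by
  by_contra hcon
  obtain ⟨w, k, hw, hk, hdisj⟩ : ∃ w k, w 0 ≠ z ∧ 0 < k ∧ ∀ Y ∈ Cyl z w k, ρ g Y ∉ Cyl z w k := by
    by_contra hno
    push Not at hno
    exact hcon (h.eq_shift_or haz hgz hno)
  obtain ⟨x₀, hx₀, hx₀'⟩ := exists_first_zero haz
  have hx₀mem : x₀ ∈ LeftAsymp z := ⟨⟨0, hx₀⟩, fun e => hx₀' (by rw [e])⟩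
  obtain ⟨μ, hpos, hadd, hinv, hone⟩ := exists_invariant_content hNa ρ h.mul x₀
  have hmono : ∀ S T, S ⊆ T → μ S ≤ μ T := by
    intro S T hST
    have := hadd S (T \ S) Set.disjoint_sdiff_right
    rw [Set.union_sdiff_cancel hST] at this
    have := hpos (T \ S)
    linarith
  have hunion : ∀ S T, μ (S ∪ T) ≤ μ S + μ T := by
    intro S T
    have := hadd S (T \ S) Set.disjoint_sdiff_right
    rw [Set.union_sdiff_self] at this
    have := hmono (T \ S) T Set.sdiff_subset
    linarith
  -- the orbit of `x₀` lies in the finitely many sets `LeftAsymp b`, with `b^ℤ` in the orbit of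
  -- `z^ℤ`, and these all have the same mass
  have hc : 0 < μ (LeftAsymp z) := by
    refine lt_of_le_of_ne (hpos _) fun hzero => ?_
    have hempty : μ ∅ = 0 := by
      have := hadd ∅ ∅ (Set.disjoint_empty _)
      rw [Set.union_empty] at this
      linarith
    set O : Set A := {b | ∃ n ∈ N, ρ n (fun _ => z) = fun _ => b} with hO
    have hfin : ∀ P : Set A, P.Finite → P ⊆ O → μ (⋃ b ∈ P, LeftAsymp b) = 0 := by
      intro P hP
      induction P, hP using Set.Finite.induction_on with
      | empty => intro _; simpa using hempty
      | @insert b P hb hP ih =>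
        intro hsub
        rw [Set.biUnion_insert]
        obtain ⟨n, hn, hnb⟩ := hsub (Set.mem_insert b P)
        have h1 : μ (LeftAsymp b) = 0 := by
          rw [← hinv n hn, h.preimage hnb, ← hzero]
        have h2 := ih ((Set.subset_insert b P).trans hsub)
        have := hunion (LeftAsymp b) (⋃ b ∈ P, LeftAsymp b)
        exact le_antisymm (by linarith) (hpos _)
    have h0 := hfin O (Set.toFinite O) subset_rfl
    rw [hone] at h0
    · exact one_ne_zero h0
    · intro n hn
      obtain ⟨b, hb⟩ := h.const n z
      exact Set.mem_biUnion (x := b) ⟨n, hn, hb⟩ (h.mapsTo hb hx₀mem)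
  set U := Cyl z w k with hU
  have hUX : U ⊆ LeftAsymp z := cyl_subset hw hk
  set V := LeftAsymp z \ U with hV
  have hgU : ρ g ⁻¹' U ⊆ V := fun Y hY =>
    ⟨by rw [← h.preimage hgz]; exact hUX hY, fun hYU => hdisj Y hYU hY⟩
  have hsum : ∀ φ : Γ, μ (ρ φ ⁻¹' U) + μ (ρ φ ⁻¹' V) = μ (ρ φ ⁻¹' LeftAsymp z) := by
    intro φ
    rw [← hadd _ _ (Set.disjoint_sdiff_right.preimage _), ← Set.preimage_union,
      Set.union_sdiff_cancel hUX]
  -- `Function.update w k b` is the word `w b` of length `k + 1`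
  have hhalf : ∀ b : A, μ (LeftAsymp z) / 2 ≤ μ (Cyl z (Function.update w k b) (k + 1)) := by
    intro b
    have hwb : Function.update w k b 0 ≠ z := by
      rwa [Function.update_of_ne (by omega)]
    have hk1 : 0 < k + 1 := by omega
    obtain ⟨φ, hφ⟩ := h.swap z (Function.update w k b) (k + 1) (k + 1) hwb hk1 le_rfl
    have hφφ : ∀ Y, ρ φ (ρ φ Y) = Y := by
      intro Y; rw [hφ]; exact swap_swap hwb hk1 le_rfl Y
    have hφinv : ∀ Y, ρ φ⁻¹ Y = ρ φ Y := by
      intro Y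
      conv_lhs => rw [← hφφ Y]
      rw [h.inv_apply]
    have hφz : ρ φ (fun _ => z) = fun _ => z := by rw [hφ]; exact swap_const hk1 le_rfl z
    have h1 : μ (ρ φ ⁻¹' U) = μ (ρ φ ⁻¹' (ρ g ⁻¹' U)) := by
      rw [← hinv (φ * g * φ⁻¹) (hN.conj_mem g hg φ)]
      congr 1
      ext Y
      simp only [Set.mem_preimage, h.mul, hφφ, hφinv]
    have h2 : μ (ρ φ ⁻¹' (ρ g ⁻¹' U)) ≤ μ (ρ φ ⁻¹' V) := hmono _ _ (Set.preimage_mono hgU)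
    have h3 : μ (ρ φ ⁻¹' V) ≤ μ (Cyl z (Function.update w k b) (k + 1)) := by
      refine hmono _ _ fun Y hY => ?_
      rw [← hφφ Y]
      have hnot : ρ φ Y ∉ Cyl z (Function.update w k b) (k + 1) := by
        rintro ⟨p, hp, hp'⟩
        refine hY.2 ⟨p, hp, fun t h0 h1 => ?_⟩
        rw [hp' t h0 (by omega), Function.update_of_ne (by omega)]
      have := swap_mem_cyl hwb hk1 le_rfl hY.1 hnot
      rwa [← hφ] at this
    have h4 := hsum φ
    rw [h.preimage hφz] at h4
    linarith
  have hdis : Disjoint (Cyl z (Function.update w k a) (k + 1))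
      (Cyl z (Function.update w k z) (k + 1)) := by
    rw [Set.disjoint_left]
    rintro Y ⟨p, hp, hp'⟩ ⟨q, hq, hq'⟩
    have hpq : p = q := by
      refine first_unique (Y := Y) hp ?_ hq ?_
      · have := hp' 0 le_rfl (by omega)
        rw [add_zero, Function.update_of_ne (by omega)] at this
        rwa [this]
      · have := hq' 0 le_rfl (by omega)
        rw [add_zero, Function.update_of_ne (by omega)] at this
        rwa [this]
    have h1 := hp' k hk.le (by omega)
    have h2 := hq' k hk.le (by omega)
    rw [Function.update_self] at h1 h2
    exact haz (h1.symm.trans (hpq ▸ h2))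
  have hsubU : ∀ b, Cyl z (Function.update w k b) (k + 1) ⊆ U := by
    rintro b Y ⟨p, hp, hp'⟩
    refine ⟨p, hp, fun t h0 h1 => ?_⟩
    rw [hp' t h0 (by omega), Function.update_of_ne (by omega)]
  have h1 := hadd _ _ hdis
  have h2 := hmono _ _ (Set.union_subset (hsubU a) (hsubU z))
  have h3 := hhalf a
  have h4 := hhalf z
  have h5 := hmono _ _ hgU
  rw [hinv g hg] at h5
  have h6 := hadd U V Set.disjoint_sdiff_right
  rw [Set.union_sdiff_cancel hUX] at h6
  linarith

/-- The theorem in dimension one: normal amenable subgroups act by shifts. -/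
theorem IsCAAction.normal_amenable [Finite A] [Nontrivial A] (h : IsCAAction ρ) {N : Subgroup Γ}
    (hN : N.Normal) (hNa : IsAmenable N) {g : Γ} (hg : g ∈ N) :
    ∃ v, ∀ Y u, ρ g Y u = Y (u + v) := by
  obtain ⟨a, z, haz⟩ := exists_pair_ne A
  obtain ⟨b, hb⟩ := h.const g z
  by_cases hbz : b = z
  · exact h.shift_of_fixes hN hNa haz hg (hbz ▸ hb)
  exfalso
  obtain ⟨r, hr0, hr⟩ := h.loc g
  -- exchange `zz` and `aa` behind a block of `z` longer than the part of `g Y₁` that differs from `b`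
  have hw : (fun _ : ℤ => a) 0 ≠ z := haz
  have hL : (2 : ℤ) ≤ 2 * r + 2 := by omega
  obtain ⟨φ, hφ⟩ := h.swap z (fun _ => a) 2 (2 * r + 2) hw two_pos hL
  have hφφ : ∀ Y, ρ φ (ρ φ Y) = Y := by
    intro Y; rw [hφ]; exact swap_swap hw two_pos hL Y
  have hφinv : ∀ Y, ρ φ⁻¹ Y = ρ φ Y := by
    intro Y
    conv_lhs => rw [← hφφ Y]
    rw [h.inv_apply]
  have hφc : ∀ c, ρ φ (fun _ => c) = fun _ => c := by
    intro c; rw [hφ]; exact swap_const two_pos hL c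
  have hmem : g⁻¹ * (φ * g * φ⁻¹) ∈ N := N.mul_mem (N.inv_mem hg) (hN.conj_mem g hg φ)
  obtain ⟨v, hv⟩ := h.shift_of_fixes hN hNa haz hmem (by
    simp only [h.mul, hφinv, hφc, hb]
    rw [← hb, h.inv_apply])
  set Y₁ : ℤ → A := Function.update (fun _ => z) 0 a with hY₁
  have hgY : ρ φ (ρ g Y₁) = ρ g Y₁ := by
    rw [hφ]
    funext u
    refine swap_off fun i hi _ _ => ?_
    have hout : ∀ t, (t < -r ∨ r < t) → ρ g Y₁ t = b := by
      intro t ht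
      rw [hr Y₁ (fun _ => z) t fun s h1 h2 => Function.update_of_ne (by omega) _ _, hb]
    rcases lt_or_ge (i - 3) (-r) with h1 | h1
    · exact hbz ((hout (i - 3) (Or.inl h1)).symm.trans (hi.1 _ (by omega) (by omega)))
    rcases lt_or_ge r (i - 3) with h2 | h2
    · exact hbz ((hout (i - 3) (Or.inr h2)).symm.trans (hi.1 _ (by omega) (by omega)))
    · exact hbz ((hout (i - 2 - (2 * r + 2)) (Or.inl (by omega))).symm.trans
        (hi.1 _ (by omega) (by omega)))
  have hY : ∀ u, Y₁ u = ρ φ Y₁ (u + v) := by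
    intro u
    rw [← hv (ρ φ Y₁) u]
    simp only [h.mul, hφinv, hφφ, hgY, h.inv_apply]
  have hY₁z : ∀ t, t ≠ 0 → Y₁ t = z := fun t ht => Function.update_of_ne ht _ _
  have hY₁0 : Y₁ 0 ≠ z := by rw [hY₁, Function.update_self]; exact haz
  have hfirst := swap_first (w := fun _ => a) (L := 2 * r + 2) hw two_pos hL (Y := Y₁) (p := 0)
    (fun i hi => hY₁z i hi.ne) hY₁0 (by
      rintro ⟨p, hp, hp'⟩
      have e0 := hp' 0 le_rfl two_pos
      have e1 := hp' 1 zero_le_one one_lt_two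
      rcases eq_or_ne p 0 with h0 | h0
      · rw [hY₁z _ (by omega)] at e1
        exact haz e1.symm
      · rw [hY₁z _ (by omega)] at e0
        exact haz e0.symm)
  have h1 := hfirst.2 0 le_rfl two_pos
  have h2 := hfirst.2 1 zero_le_one one_lt_two
  rw [← hφ] at h1 h2
  have e1 := hY (-2 - v)
  have e2 := hY (-1 - v)
  rw [show -2 - v + v = 0 - 2 + 0 by ring, h1] at e1
  rw [show -1 - v + v = 0 - 2 + 1 by ring, h2] at e2
  rcases eq_or_ne (-2 - v) 0 with h0 | h0
  · rw [hY₁z _ (by omega)] at e2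
    exact haz e2.symm
  · rw [hY₁z _ h0] at e1
    exact haz e1.symm

end OneDim

/-! ### Restriction to a one-dimensional subsystem -/

theorem exists_finite_dependence {ι A : Type*} [Finite A] [TopologicalSpace A]
    [DiscreteTopology A] {f : (ι → A) → A} (hf : Continuous f) :
    ∃ S : Finset ι, ∀ y y', (∀ i ∈ S, y i = y' i) → f y = f y' := by
  classical
  have hloc : ∀ y, ∃ S : Finset ι, ∀ y', (∀ i ∈ S, y' i = y i) → f y' = f y := by
    intro y
    have hopen : IsOpen (f ⁻¹' {f y}) := (isOpen_discrete _).preimage hf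
    obtain ⟨S, u, hu, hsub⟩ := isOpen_pi_iff.1 hopen y rfl
    exact ⟨S, fun y' hy' => hsub fun i hi => by rw [hy' i hi]; exact (hu i hi).2⟩
  choose S hS using hloc
  obtain ⟨T, hT⟩ := CompactSpace.elim_nhds_subcover
    (fun y : ι → A => (S y : Set ι).pi fun i => {y i})
    (fun y => set_pi_mem_nhds (S y).finite_toSet fun i _ => by simp)
  refine ⟨T.biUnion S, fun y y' hyy' => ?_⟩
  obtain ⟨x, hx, hyx⟩ : ∃ x ∈ T, y ∈ (S x : Set ι).pi fun i => {x i} := by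
    have : y ∈ (⊤ : Set (ι → A)) := trivial
    rw [← hT] at this
    simpa only [Set.mem_iUnion, exists_prop] using this
  rw [hS x y fun i hi => hyx i hi, hS x y' fun i hi => ?_]
  rw [← hyy' i (Finset.mem_biUnion.2 ⟨x, hx, hi⟩)]
  exact hyx i hi

section HighDim

/-- The homomorphism `ℤ^d → ℤ` reading a vector as the list of its digits in base `K`. -/
def code (d : ℕ) (K : ℤ) (u : Fin d → ℤ) : ℤ := ∑ i, u i * K ^ (i : ℕ)

theorem code_add {d : ℕ} {K : ℤ} (u v : Fin d → ℤ) :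
    code d K (u + v) = code d K u + code d K v := by
  simp [code, add_mul, Finset.sum_add_distrib]

/-- Zero is the only vector with entries of absolute value less than `K` and code `0`. -/
theorem eq_zero_of_code_eq_zero {K : ℤ} : ∀ {d : ℕ} {c : Fin d → ℤ},
    (∀ i, |c i| < K) → code d K c = 0 → c = 0
  | 0, c, _, _ => Subsingleton.elim _ _
  | d + 1, c, hc, h => by
    have hs : code (d + 1) K c = c 0 + K * code d K (fun i => c i.succ) := by
      simp only [code, Fin.sum_univ_succ, Finset.mul_sum, Fin.val_zero, pow_zero, mul_one,
        Fin.val_succ, pow_succ]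
      congr 1
      exact Finset.sum_congr rfl fun i _ => by ring
    rw [hs] at h
    have hK : 0 < K := (abs_nonneg _).trans_lt (hc 0)
    have h0 : c 0 = 0 := Int.eq_zero_of_abs_lt_dvd (m := K)
      ⟨-code d K (fun i => c i.succ), by linarith⟩ (hc 0)
    rw [h0, zero_add] at h
    have ih := eq_zero_of_code_eq_zero (fun i => hc i.succ)
      ((mul_eq_zero.1 h).resolve_left hK.ne')
    funext i
    refine Fin.cases h0 (fun j => ?_) i
    exact congrFun ih j

theorem exists_code_injOn (d : ℕ) (S : Finset (Fin d → ℤ)) :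
    ∃ K : ℤ, Set.InjOn (code d K) S := by
  obtain ⟨M, hM⟩ : ∃ M : ℤ, ∀ s ∈ S, ∀ i, |s i| ≤ M := by
    refine ⟨∑ s ∈ S, ∑ i, |s i|, fun s hs i => ?_⟩
    calc |s i| ≤ ∑ i, |s i| :=
          Finset.single_le_sum (f := fun i => |s i|) (fun _ _ => abs_nonneg _) (Finset.mem_univ i)
      _ ≤ _ := Finset.single_le_sum (f := fun s => ∑ i, |s i|)
          (fun _ _ => Finset.sum_nonneg fun _ _ => abs_nonneg _) hs
  refine ⟨2 * M + 1, fun s hs t ht hst => ?_⟩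
  rw [← sub_eq_zero]
  refine eq_zero_of_code_eq_zero (K := 2 * M + 1) (fun i => ?_) ?_
  · have h1 := hM s hs i
    have h2 := hM t ht i
    have h3 := abs_sub (s i) (t i)
    rw [Pi.sub_apply]
    omega
  · have := code_add (K := 2 * M + 1) (s - t) t
    rw [sub_add_cancel] at this
    omega

variable {d : ℕ} {A : Type*}

/-- The first standard basis vector of `ℤ^d`, which has code `1`. -/
def axis (hd : 1 ≤ d) : Fin d → ℤ := Pi.single ⟨0, hd⟩ 1

theorem code_smul_axis (hd : 1 ≤ d) (K t : ℤ) : code d K (t • axis hd) = t := by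
  rw [code, Finset.sum_eq_single ⟨0, hd⟩]
  · simp [axis]
  · intro i _ hi
    simp [axis, Pi.single_eq_of_ne hi]
  · simp

theorem ShiftAut.apply_add [TopologicalSpace A] (g : ShiftAutD d A)
    (y : (Fin d → ℤ) → A) (u v : Fin d → ℤ) :
    g.1 (fun s => y (s + v)) u = g.1 y (u + v) := by
  have h := Subgroup.mem_centralizer_iff.1 g.2 (shiftD d A v) ⟨v, rfl⟩
  have hcomm : (shiftD d A v) (g.1 y) = g.1 (shiftD d A v y) := congrArg (fun f => f y) h
  exact (congrFun hcomm u).symm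

/-- The action of `g` on the configurations `Y ∘ code`, as a map of `A^ℤ`: by `restr_code`,
`g (Y ∘ code) = restr g Y ∘ code`. -/
def restr [TopologicalSpace A] (hd : 1 ≤ d) (K : ℤ) (g : ShiftAutD d A) (Y : ℤ → A) (t : ℤ) : A :=
  g.1 (fun u => Y (code d K u)) (t • axis hd)

theorem restr_code [TopologicalSpace A] (hd : 1 ≤ d) (K : ℤ) (g : ShiftAutD d A)
    (Y : ℤ → A) (u : Fin d → ℤ) :
    restr hd K g Y (code d K u) = g.1 (fun u => Y (code d K u)) u := by
  have h := ShiftAut.apply_add g (fun u => Y (code d K u)) (code d K u • axis hd)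
    (u - code d K u • axis hd)
  have hc : code d K (u - code d K u • axis hd) = 0 := by
    have := code_add (K := K) (u - code d K u • axis hd) (code d K u • axis hd)
    rw [sub_add_cancel, code_smul_axis] at this
    omega
  simp only [code_add, hc, add_zero, add_sub_cancel] at h
  exact h

/-- The involution `swap` performed on every row of `y` in the direction of `axis`. -/
noncomputable def rowSwap (hd : 1 ≤ d) (z : A) (w : ℤ → A) (k L : ℤ)
    (y : (Fin d → ℤ) → A) (u : Fin d → ℤ) : A :=
  swap z w k L (fun t => y (u + t • axis hd)) 0

theorem rowSwap_row (hd : 1 ≤ d) {z : A} {w : ℤ → A} {k L : ℤ} (hw : w 0 ≠ z) (hk : 0 < k)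
    (hL : k ≤ L) (y : (Fin d → ℤ) → A) (u : Fin d → ℤ) (s : ℤ) :
    rowSwap hd z w k L y (u + s • axis hd) = swap z w k L (fun t => y (u + t • axis hd)) s := by
  have := swap_shift hw hk hL (fun t => y (u + t • axis hd)) s 0
  rw [zero_add] at this
  rw [← this, rowSwap]
  congr 1
  funext t
  rw [add_smul, add_assoc, add_comm (s • axis hd)]

theorem rowSwap_rowSwap (hd : 1 ≤ d) {z : A} {w : ℤ → A} {k L : ℤ} (hw : w 0 ≠ z) (hk : 0 < k)
    (hL : k ≤ L) (y : (Fin d → ℤ) → A) : rowSwap hd z w k L (rowSwap hd z w k L y) = y := by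
  funext u
  conv_lhs => rw [rowSwap]
  simp only [rowSwap_row hd hw hk hL]
  exact (congrFun (swap_swap hw hk hL _) 0).trans (by simp)

/-- `rowSwap` as an element of `Aut(A^{ℤ^d})`. -/
noncomputable def rowSwapAut [TopologicalSpace A] [DiscreteTopology A] (hd : 1 ≤ d)
    {z : A} {w : ℤ → A} {k L : ℤ}
    (hw : w 0 ≠ z) (hk : 0 < k) (hL : k ≤ L) : ShiftAutD d A where
  val :=
    { toFun := rowSwap hd z w k L
      invFun := rowSwap hd z w k L
      left_inv := rowSwap_rowSwap hd hw hk hL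
      right_inv := rowSwap_rowSwap hd hw hk hL
      continuous_toFun := continuous_pi fun u => (continuous_apply 0).comp
        ((continuous_swap hw hk hL).comp (continuous_pi fun t => continuous_apply _))
      continuous_invFun := continuous_pi fun u => (continuous_apply 0).comp
        ((continuous_swap hw hk hL).comp (continuous_pi fun t => continuous_apply _)) }
  property := by
    rw [ShiftAutD, Subgroup.mem_centralizer_iff]
    rintro _ ⟨v, rfl⟩
    refine Homeomorph.ext fun y => funext fun u => ?_
    change swap z w k L (fun t => y (u + v + t • axis hd)) 0 =
      swap z w k L (fun t => y (u + t • axis hd + v)) 0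
    congr 1
    funext t
    rw [add_right_comm]

theorem restr_rowSwapAut [TopologicalSpace A] [DiscreteTopology A] (hd : 1 ≤ d) (K : ℤ)
    {z : A} {w : ℤ → A} {k L : ℤ}
    (hw : w 0 ≠ z) (hk : 0 < k) (hL : k ≤ L) :
    restr hd K (rowSwapAut hd hw hk hL) = swap z w k L := by
  funext Y s
  have := rowSwap_row hd hw hk hL (fun u => Y (code d K u)) 0 s
  simp only [zero_add, code_smul_axis] at this
  exact this

theorem exists_finite_neighborhood [Finite A] [TopologicalSpace A] [DiscreteTopology A]
    (g : ShiftAutD d A) :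
    ∃ S : Finset (Fin d → ℤ), ∀ y y' u, (∀ s ∈ S, y (s + u) = y' (s + u)) →
      g.1 y u = g.1 y' u := by
  obtain ⟨S, hS⟩ := exists_finite_dependence (f := fun y => g.1 y 0)
    ((continuous_apply 0).comp g.1.continuous)
  refine ⟨S, fun y y' u h => ?_⟩
  have h1 := ShiftAut.apply_add g y 0 u
  have h2 := ShiftAut.apply_add g y' 0 u
  rw [zero_add] at h1 h2
  rw [← h1, ← h2]
  exact hS _ _ h

theorem isCAAction_restr [Finite A] [TopologicalSpace A] [DiscreteTopology A] (hd : 1 ≤ d) (K : ℤ) :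
    IsCAAction (restr (A := A) hd K) where
  one Y := by
    funext t
    change Y (code d K (t • axis hd)) = Y t
    rw [code_smul_axis]
  mul a b Y := by
    funext t
    have : (fun u => restr hd K b Y (code d K u)) = b.1 fun u => Y (code d K u) :=
      funext fun u => restr_code hd K b Y u
    conv_rhs => rw [restr, this]
    rfl
  shift γ Y v u := by
    have := ShiftAut.apply_add γ (fun s => Y (code d K s)) (u • axis hd) (v • axis hd)
    simp only [code_add, code_smul_axis] at this
    rw [restr, this, restr, add_smul]
  loc γ := by
    obtain ⟨S, hS⟩ := exists_finite_neighborhood γ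
    refine ⟨∑ s ∈ S, |code d K s|, Finset.sum_nonneg fun _ _ => abs_nonneg _,
      fun Y Y' u h => hS _ _ _ fun s hs => ?_⟩
    have hle : |code d K s| ≤ ∑ s ∈ S, |code d K s| :=
      Finset.single_le_sum (f := fun s => |code d K s|) (fun _ _ => abs_nonneg _) hs
    rw [abs_le] at hle
    rw [code_add, code_smul_axis]
    exact h _ (by omega) (by omega)
  swap z w k L hw hk hL := ⟨rowSwapAut hd hw hk hL, restr_rowSwapAut hd K hw hk hL⟩

end HighDim

end FullShift

/-- Every normal amenable subgroup of `Aut(A^{ℤ^d})` is contained in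
`Σ(A^{ℤ^d})`, the group of shifts. -/
theorem normal_amenable_le_shiftsD
    (d : ℕ) (hd : 1 ≤ d)
    (A : Type*) [Fintype A] [TopologicalSpace A] [DiscreteTopology A]
    (hA : 2 ≤ Fintype.card A)
    (N : Subgroup (ShiftAutD d A)) (hN : N.Normal) (hNa : IsAmenable N) :
    ∀ g ∈ N, ∃ v : Fin d → ℤ,
      ((g : ShiftAutD d A) : ((Fin d → ℤ) → A) ≃ₜ ((Fin d → ℤ) → A)) = shiftD d A v := by
  intro g hg
  classical
  have : Nontrivial A := Fintype.one_lt_card_iff_nontrivial.1 hA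
  obtain ⟨S, hS⟩ := FullShift.exists_finite_neighborhood g
  obtain ⟨K, hK⟩ := FullShift.exists_code_injOn d S
  obtain ⟨v, hv⟩ := (FullShift.isCAAction_restr (A := A) hd K).normal_amenable hN hNa hg
  have hloc : ∀ Y : ℤ → A, g.1 (fun u => Y (FullShift.code d K u)) 0 = Y v := by
    intro Y
    have h0 : FullShift.code d K 0 = 0 := by simp [FullShift.code]
    rw [← FullShift.restr_code hd, hv, h0, zero_add]
  -- the displacement `v` is the code of some `b ∈ S`, since `Y v` is read off from `S`
  obtain ⟨b, hb, hbv⟩ : ∃ b ∈ S, FullShift.code d K b = v := by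
    by_contra hno
    push Not at hno
    obtain ⟨a, z, haz⟩ := exists_pair_ne A
    have h1 := hloc fun _ => z
    have h2 := hloc (Function.update (fun _ => z) v a)
    rw [Function.update_self] at h2
    refine haz (h2.symm.trans (Eq.trans ?_ h1))
    refine hS _ _ _ fun s hs => ?_
    rw [add_zero, Function.update_of_ne (hno s hs)]
  have hzero : ∀ y, g.1 y 0 = y b := by
    intro y
    have hinv : ∀ s ∈ S, y (Function.invFunOn (FullShift.code d K) S (FullShift.code d K s)) = y s :=
      fun s hs => congrArg y (hK.leftInvOn_invFunOn hs)
    rw [← hinv b hb, hbv, ← hloc fun t => y (Function.invFunOn (FullShift.code d K) S t)]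
    exact hS _ _ _ fun s hs => by rw [add_zero, hinv s hs]
  refine ⟨b, Homeomorph.ext fun y => funext fun u => ?_⟩
  have h := FullShift.ShiftAut.apply_add g y 0 u
  rw [zero_add, hzero] at h
  rw [← h, add_comm]
  rfl
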